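/- arXiv:2301.11571 — 3 statements merged into one kernel-verified Lean document; each statement's English description precedes it below -/
import Mathlib

section
/- Let u ≥ 2 and S ⊆ {1,…,u} be a nonempty finite set, let 0 < γ < 1/4, set η = (1/2)·ln((1+2γ)/(1−2γ)), and let k be a positive integer with k ≥ ln(u)·γ^{−2}. Let h₁,…,h_k: S → {−1,1} and define the multiplicative-weights process: D₁(i) = 1/|S| for i ∈ S; for j = 1,…,k set Z_j = ∑_{i ∈ S} D_j(i)·exp(−η·h_j(i)) and D_{j+1}(i) = D_j(i)·exp(−η·h_j(i))/Z_j. If ∑_{i ∈ S} D_j(i)·h_j(i) ≥ 2γ for every j ∈ {1,…,k}, then the average f(i) = (1/k)·∑_{j=1}^{k} h_j(i) satisfies f(i) ≥ γ/4 for every i ∈ S. -/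
/-!
Taking logarithms in the update rule gives
`log (D (k+1) i) = log (D 1 i) - η ∑ j, h j i - ∑ j, log (Z j)`, and the left side is nonpositive
because `D (k+1)` is a probability distribution. Convexity of `exp` bounds `Z j` by
`cosh η - x sinh η` when the edge of `h j` is at least `x`; this is smallest at `η = artanh x`,
where it equals `√(1 - x²)`. With `x = 2γ` the sum of the margins of `i` is therefore at least
`(k * (-log (1 - x²) / 2) - log (1 / D 1 i)) / artanh x`. As `-log (1 - x²)` dominates both `x²`
and `x * artanh x`, the first term of the numerator is at least twice the second, and the quotient
is at least `k * γ / 2`.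
-/

open Finset Real

section Artanh

variable {x : ℝ}

theorem log_one_sub_sq_le (hx : x ∈ Set.Ioo (-1) 1) : log (1 - x ^ 2) ≤ -x ^ 2 := by
  have hpos : 0 < 1 - x ^ 2 := by nlinarith [hx.1, hx.2]
  linarith [log_le_sub_one_of_pos hpos]

theorem hasSum_mul_artanh (hx : x ∈ Set.Ioo (-1) 1) :
    HasSum (fun n : ℕ => (x ^ 2) ^ (n + 1) / (2 * n + 1)) (x * artanh x) := by
  have hlog : x * artanh x = x / 2 * (log (1 + x) - log (1 - x)) := by
    rw [artanh_eq_half_log (Set.Ioo_subset_Icc_self hx),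
      log_div (by linarith [hx.1]) (by linarith [hx.2])]
    ring
  rw [hlog]
  refine ((hasSum_log_sub_log_of_abs_lt_one (abs_lt.2 hx)).mul_left (x / 2)).congr_fun ?_
  intro n
  ring

theorem mul_artanh_le_neg_log (hx : x ∈ Set.Ioo (-1) 1) :
    x * artanh x ≤ -log (1 - x ^ 2) := by
  have hsq : |x ^ 2| < 1 := by
    rw [abs_pow]
    exact pow_lt_one₀ (abs_nonneg x) (abs_lt.2 hx) two_ne_zero
  refine hasSum_le (fun n => ?_) (hasSum_mul_artanh hx) (hasSum_pow_div_log_of_abs_lt_one hsq)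
  gcongr
  linarith [n.cast_nonneg (α := ℝ)]

theorem cosh_artanh_sub_mul_sinh_artanh (hx : x ∈ Set.Ioo (-1) 1) :
    cosh (artanh x) - x * sinh (artanh x) = √(1 - x ^ 2) := by
  rw [cosh_artanh hx, sinh_artanh hx, mul_div_assoc', ← sub_div, ← sq, div_sqrt]

end Artanh

section ExponentialMoment

variable {ι : Type*} {S : Finset ι} {w f : ι → ℝ}

theorem sum_mul_exp_le_cosh_sub_mul_sinh (hw : ∀ i ∈ S, 0 ≤ w i) (hsum : ∑ i ∈ S, w i = 1)
    (hf : ∀ i ∈ S, |f i| ≤ 1) (η : ℝ) :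
    ∑ i ∈ S, w i * exp (-η * f i) ≤ cosh η - (∑ i ∈ S, w i * f i) * sinh η :=
  calc ∑ i ∈ S, w i * exp (-η * f i)
      ≤ ∑ i ∈ S, w i * (cosh η - f i * sinh η) := by
        refine sum_le_sum fun i hi => mul_le_mul_of_nonneg_left ?_ (hw i hi)
        simpa only [mul_neg, neg_mul, mul_comm η, cosh_neg, sinh_neg, ← sub_eq_add_neg] using
          exp_mul_le_cosh_add_mul_sinh (hf i hi) (-η)
    _ = (∑ i ∈ S, w i) * cosh η - (∑ i ∈ S, w i * f i) * sinh η := by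
        simp only [mul_sub, sum_sub_distrib, sum_mul, mul_assoc]
    _ = cosh η - (∑ i ∈ S, w i * f i) * sinh η := by rw [hsum, one_mul]

theorem sum_mul_exp_artanh_le_sqrt {x : ℝ} (hx : x ∈ Set.Ico 0 1) (hw : ∀ i ∈ S, 0 ≤ w i)
    (hsum : ∑ i ∈ S, w i = 1) (hf : ∀ i ∈ S, |f i| ≤ 1) (hedge : x ≤ ∑ i ∈ S, w i * f i) :
    ∑ i ∈ S, w i * exp (-artanh x * f i) ≤ √(1 - x ^ 2) := by
  have hsinh : 0 ≤ sinh (artanh x) := sinh_nonneg_iff.2 (artanh_nonneg hx.1)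
  calc ∑ i ∈ S, w i * exp (-artanh x * f i)
      ≤ cosh (artanh x) - (∑ i ∈ S, w i * f i) * sinh (artanh x) :=
        sum_mul_exp_le_cosh_sub_mul_sinh hw hsum hf _
    _ ≤ cosh (artanh x) - x * sinh (artanh x) := by gcongr
    _ = √(1 - x ^ 2) := cosh_artanh_sub_mul_sinh_artanh ⟨by linarith [hx.1], hx.2⟩

end ExponentialMoment

/-- `k` rounds of the multiplicative-weights process on `S` with step size `η`: `h j` is the
hypothesis of round `j`, `D j` the distribution it is tested against and `Z j` the normalizer of the
update. Rounds are numbered from `1` as in the paper, and the initial distribution `D 1` may be any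
probability distribution with full support on `S`. -/
structure IsMulWeights {ι : Type*} (S : Finset ι) (η : ℝ) (k : ℕ) (h D : ℕ → ι → ℝ) (Z : ℕ → ℝ) :
    Prop where
  init_pos : ∀ i ∈ S, 0 < D 1 i
  sum_init : ∑ i ∈ S, D 1 i = 1
  normalizer_eq : ∀ j ∈ Icc 1 k, Z j = ∑ i ∈ S, D j i * exp (-η * h j i)
  succ_eq : ∀ j ∈ Icc 1 k, ∀ i ∈ S, D (j + 1) i = D j i * exp (-η * h j i) / Z j

namespace IsMulWeights

variable {ι : Type*} {S : Finset ι} {η : ℝ} {k : ℕ} {h D : ℕ → ι → ℝ} {Z : ℕ → ℝ}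

theorem nonempty (hD : IsMulWeights S η k h D Z) : S.Nonempty :=
  nonempty_of_sum_ne_zero (hD.sum_init.trans_ne one_ne_zero)

theorem normalizer_pos_of_pos (hD : IsMulWeights S η k h D Z) {j : ℕ} (hj : j ∈ Icc 1 k)
    (hpos : ∀ i ∈ S, 0 < D j i) : 0 < Z j := by
  rw [hD.normalizer_eq j hj]
  exact sum_pos (fun i hi => mul_pos (hpos i hi) (exp_pos _)) hD.nonempty

theorem pos (hD : IsMulWeights S η k h D Z) {j : ℕ} (hj : j ∈ Icc 1 (k + 1)) :
    ∀ i ∈ S, 0 < D j i := by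
  obtain ⟨hj1, hjk⟩ := mem_Icc.1 hj
  induction j, hj1 using Nat.le_induction with
  | base => exact hD.init_pos
  | succ j hj1 ih =>
    have hj : j ∈ Icc 1 k := mem_Icc.2 ⟨hj1, by lia⟩
    have hpos : ∀ i ∈ S, 0 < D j i := ih (mem_Icc.2 ⟨hj1, by lia⟩) (by lia)
    intro i hi
    rw [hD.succ_eq j hj i hi]
    exact div_pos (mul_pos (hpos i hi) (exp_pos _)) (hD.normalizer_pos_of_pos hj hpos)

theorem normalizer_pos (hD : IsMulWeights S η k h D Z) {j : ℕ} (hj : j ∈ Icc 1 k) : 0 < Z j :=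
  hD.normalizer_pos_of_pos hj (hD.pos (Icc_subset_Icc_right k.le_succ hj))

theorem sum_eq_one (hD : IsMulWeights S η k h D Z) {j : ℕ} (hj : j ∈ Icc 1 (k + 1)) :
    ∑ i ∈ S, D j i = 1 := by
  obtain ⟨hj1, hjk⟩ := mem_Icc.1 hj
  cases j, hj1 using Nat.le_induction with
  | base => exact hD.sum_init
  | succ j hj1 =>
    have hj : j ∈ Icc 1 k := mem_Icc.2 ⟨hj1, by lia⟩
    rw [sum_congr rfl (hD.succ_eq j hj), ← sum_div, ← hD.normalizer_eq j hj,
      div_self (hD.normalizer_pos hj).ne']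

theorem le_one (hD : IsMulWeights S η k h D Z) {j : ℕ} (hj : j ∈ Icc 1 (k + 1)) {i : ι}
    (hi : i ∈ S) : D j i ≤ 1 :=
  hD.sum_eq_one hj ▸ single_le_sum (fun i hi => (hD.pos hj i hi).le) hi

theorem log_succ (hD : IsMulWeights S η k h D Z) {j : ℕ} (hj : j ∈ Icc 1 k) {i : ι} (hi : i ∈ S) :
    log (D (j + 1) i) = log (D j i) - η * h j i - log (Z j) := by
  have hpos : 0 < D j i := hD.pos (Icc_subset_Icc_right k.le_succ hj) i hi
  rw [hD.succ_eq j hj i hi, log_div (by positivity) (hD.normalizer_pos hj).ne',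
    log_mul hpos.ne' (exp_ne_zero _), log_exp]
  ring

theorem log_last (hD : IsMulWeights S η k h D Z) {i : ι} (hi : i ∈ S) :
    log (D (k + 1) i) =
      log (D 1 i) - η * ∑ j ∈ Icc 1 k, h j i - ∑ j ∈ Icc 1 k, log (Z j) := by
  have htelescope : ∑ j ∈ Icc 1 k, (log (D (j + 1) i) - log (D j i)) =
      log (D (k + 1) i) - log (D 1 i) := by
    rw [← Ico_add_one_right_eq_Icc]
    exact sum_Ico_sub (fun j => log (D j i)) (by simp)
  have hsteps : ∑ j ∈ Icc 1 k, (log (D (j + 1) i) - log (D j i)) =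
      -(η * ∑ j ∈ Icc 1 k, h j i) - ∑ j ∈ Icc 1 k, log (Z j) := by
    rw [mul_sum, ← sum_neg_distrib, ← sum_sub_distrib]
    exact sum_congr rfl fun j hj => by rw [hD.log_succ hj hi]; ring
  linarith

theorem log_init_sub_mul_sum_le (hD : IsMulWeights S η k h D Z) {i : ι} (hi : i ∈ S) :
    log (D 1 i) - η * ∑ j ∈ Icc 1 k, h j i ≤ ∑ j ∈ Icc 1 k, log (Z j) := by
  have hlast : k + 1 ∈ Icc 1 (k + 1) := right_mem_Icc.2 (Nat.le_add_left 1 k)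
  have hnonpos : log (D (k + 1) i) ≤ 0 :=
    log_nonpos (hD.pos hlast i hi).le (hD.le_one hlast hi)
  linarith [hD.log_last hi]

theorem log_normalizer_le {x : ℝ} (hD : IsMulWeights S (artanh x) k h D Z) (hx : x ∈ Set.Ico 0 1)
    {j : ℕ} (hj : j ∈ Icc 1 k) (hh : ∀ i ∈ S, |h j i| ≤ 1) (hadv : x ≤ ∑ i ∈ S, D j i * h j i) :
    log (Z j) ≤ log (1 - x ^ 2) / 2 := by
  have hj' : j ∈ Icc 1 (k + 1) := Icc_subset_Icc_right k.le_succ hj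
  rw [← log_sqrt (by nlinarith [hx.1, hx.2])]
  refine log_le_log (hD.normalizer_pos hj) ?_
  rw [hD.normalizer_eq j hj]
  exact sum_mul_exp_artanh_le_sqrt hx (fun i hi => (hD.pos hj' i hi).le) (hD.sum_eq_one hj') hh hadv

theorem log_init_sub_artanh_mul_sum_le {x : ℝ} (hD : IsMulWeights S (artanh x) k h D Z)
    (hx : x ∈ Set.Ico 0 1) (hh : ∀ j ∈ Icc 1 k, ∀ i ∈ S, |h j i| ≤ 1)
    (hadv : ∀ j ∈ Icc 1 k, x ≤ ∑ i ∈ S, D j i * h j i) {i : ι} (hi : i ∈ S) :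
    log (D 1 i) - artanh x * ∑ j ∈ Icc 1 k, h j i ≤ k * (log (1 - x ^ 2) / 2) :=
  calc log (D 1 i) - artanh x * ∑ j ∈ Icc 1 k, h j i
      ≤ ∑ j ∈ Icc 1 k, log (Z j) := hD.log_init_sub_mul_sum_le hi
    _ ≤ ∑ _j ∈ Icc 1 k, log (1 - x ^ 2) / 2 :=
        sum_le_sum fun j hj => hD.log_normalizer_le hx hj (hh j hj) (hadv j hj)
    _ = k * (log (1 - x ^ 2) / 2) := by rw [sum_const, Nat.card_Icc, nsmul_eq_mul]; simp

end IsMulWeights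

theorem adaboost_margin_guarantee_general {ι : Type*} {S : Finset ι} {γ : ℝ} (hγ0 : 0 < γ)
    (hγ : γ < 1 / 2) {k : ℕ} (hk0 : 0 < k) {h D : ℕ → ι → ℝ} {Z : ℕ → ℝ}
    (hD : IsMulWeights S (artanh (2 * γ)) k h D Z)
    (hh : ∀ j ∈ Icc 1 k, ∀ i ∈ S, |h j i| ≤ 1)
    (hadv : ∀ j ∈ Icc 1 k, 2 * γ ≤ ∑ i ∈ S, D j i * h j i)
    {i : ι} (hi : i ∈ S) (hk : log (1 / D 1 i) ≤ k * γ ^ 2) :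
    γ / 2 ≤ (1 / (k : ℝ)) * ∑ j ∈ Icc 1 k, h j i := by
  have hx : 2 * γ ∈ Set.Ioo (-1) 1 := ⟨by linarith, by linarith⟩
  have hη : 0 < artanh (2 * γ) := artanh_pos ⟨by linarith, hx.2⟩
  have hk0' : (0 : ℝ) < k := Nat.cast_pos.2 hk0
  have hpotential := hD.log_init_sub_artanh_mul_sum_le ⟨by linarith, hx.2⟩ hh hadv hi
  rw [one_div, log_inv] at hk
  have hsq : k * log (1 - (2 * γ) ^ 2) ≤ k * -(2 * γ) ^ 2 := by gcongr; exact log_one_sub_sq_le hx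
  have hartanh : k * (2 * γ * artanh (2 * γ)) ≤ k * -log (1 - (2 * γ) ^ 2) := by
    gcongr
    exact mul_artanh_le_neg_log hx
  have hmargin : artanh (2 * γ) * (γ / 2 * k) ≤ artanh (2 * γ) * ∑ j ∈ Icc 1 k, h j i := by
    linarith
  rw [one_div_mul_eq_div, le_div_iff₀ hk0']
  exact le_of_mul_le_mul_left hmargin hη

/-- Margin guarantee for the AdaBoost-style majority vote: if every
round's hypothesis has advantage at least `2γ` under the current distribution and
`k ≥ ln(u)/γ²`, then the average `f(i) = (1/k)·∑_j h_j(i)` satisfies `f(i) ≥ γ/4`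
for every `i ∈ S`. -/
theorem adaboost_margin_guarantee
    (u : ℕ) (hu : 2 ≤ u) (S : Finset (Fin u)) (hS : S.Nonempty)
    (γ : ℝ) (hγ0 : 0 < γ) (hγ : γ < 1 / 4)
    (η : ℝ) (hη : η = 1 / 2 * Real.log ((1 + 2 * γ) / (1 - 2 * γ)))
    (k : ℕ) (hk0 : 0 < k) (hk : Real.log u * (γ ^ 2)⁻¹ ≤ (k : ℝ))
    (h : ℕ → Fin u → ℝ) (hh : ∀ j ∈ Finset.Icc 1 k, ∀ i ∈ S, h j i = 1 ∨ h j i = -1)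
    (D : ℕ → Fin u → ℝ) (Z : ℕ → ℝ)
    (hD1 : ∀ i ∈ S, D 1 i = 1 / S.card)
    (hZ : ∀ j ∈ Finset.Icc 1 k, Z j = ∑ i ∈ S, D j i * Real.exp (-η * h j i))
    (hDsucc : ∀ j ∈ Finset.Icc 1 k, ∀ i ∈ S,
      D (j + 1) i = D j i * Real.exp (-η * h j i) / Z j)
    (hadv : ∀ j ∈ Finset.Icc 1 k, 2 * γ ≤ ∑ i ∈ S, D j i * h j i) :
    ∀ i ∈ S, γ / 4 ≤ (1 / (k : ℝ)) * ∑ j ∈ Finset.Icc 1 k, h j i := by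
  intro i hi
  have hcard : (0 : ℝ) < S.card := Nat.cast_pos.2 hS.card_pos
  have hartanh : η = artanh (2 * γ) := by
    rw [hη, artanh_eq_half_log ⟨by linarith, by linarith⟩]
  have hprocess : IsMulWeights S (artanh (2 * γ)) k h D Z :=
    { init_pos := fun i hi => by rw [hD1 i hi]; positivity
      sum_init := by rw [sum_congr rfl hD1, sum_const, nsmul_eq_mul, mul_one_div_cancel hcard.ne']
      normalizer_eq := hartanh ▸ hZ
      succ_eq := hartanh ▸ hDsucc }
  have habs : ∀ j ∈ Icc 1 k, ∀ i ∈ S, |h j i| ≤ 1 := fun j hj i hi =>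
    ((abs_eq zero_le_one).2 (hh j hj i hi)).le
  have hrounds : log (1 / D 1 i) ≤ k * γ ^ 2 :=
    calc log (1 / D 1 i) = log S.card := by rw [hD1 i hi, one_div_one_div]
      _ ≤ log u := log_le_log hcard (Nat.cast_le.2 (card_finset_fin_le S))
      _ ≤ k * γ ^ 2 := (mul_inv_le_iff₀ (by positivity)).1 hk
  linarith [adaboost_margin_guarantee_general hγ0 (by linarith) hk0 hprocess habs hadv hi hrounds]
end

section
/- Let α ≥ 1 be a real, let r ≥ 1 be a real and m a positive integer with m ≥ 4r, and suppose u := 8α²·m/ln(m/r) is a positive integer; set r₁ = α²·r, so that u ≥ 8r₁. Let S consist of m independent uniform samples from {1,…,u}. Then with probability at least 1/4, at least r elements of {1,…,u−r₁} do not appear in S. -/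
open MeasureTheory
open ProbabilityTheory

/-!
The number `N` of points of `{1, …, u - r₁}` missed by the sample is a sum of indicators, one for
each point. The corresponding events are pairwise negatively correlated, because
`1 - p - q ≤ (1 - p) (1 - q)`, so `Var N ≤ E N`, and Chebyshev's inequality gives
`P (N < r) ≤ E N / (E N - r)² ≤ 3 / 4` as soon as `E N ≥ 4 r ≥ 4`.

Put `c = α²` and `L = log (m / r)`, so that `r₁ = c r` and `u L = 8 c r exp L`. Then `u ≥ 8 r₁`, at
least `u / 2` points are eligible, and each of them is missed with probability
`(1 - 1 / u) ^ m ≥ exp (-2 m / u) ≥ exp (-L / 4)`.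
Hence `E N ≥ (u / 2) exp (-L / 4) ≥ 4 r exp (3 L / 4) / L ≥ 4 r`.
-/

section SecondMoment

variable {Ω : Type*} [MeasurableSpace Ω] {P : Measure Ω}

lemma memLp_indicator_one [IsFiniteMeasure P] {s : Set Ω} (hs : MeasurableSet s) :
    MemLp (s.indicator (1 : Ω → ℝ)) 2 P :=
  memLp_indicator_const 2 hs 1 (.inr (measure_ne_top P s))

lemma measureReal_lt_le_variance_div_sq [IsFiniteMeasure P] {X : Ω → ℝ} (hX : MemLp X 2 P) {a : ℝ}
    (ha : a < P[X]) : P.real {ω | X ω < a} ≤ Var[X; P] / (P[X] - a) ^ 2 := by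
  have hsub : {ω | X ω < a} ⊆ {ω | P[X] - a ≤ |X ω - P[X]|} := fun ω (hω : X ω < a) ↦
    (sub_le_sub_left hω.le _).trans ((neg_sub _ _).symm.trans_le (neg_le_abs _))
  exact ENNReal.toReal_le_of_le_ofReal (div_nonneg (variance_nonneg X P) (sq_nonneg _))
    ((measure_mono hsub).trans (meas_ge_le_variance_div_sq hX (sub_pos.2 ha)))

variable [IsProbabilityMeasure P]

lemma covariance_indicator_one {s t : Set Ω} (hs : MeasurableSet s) (ht : MeasurableSet t) :
    cov[s.indicator (1 : Ω → ℝ), t.indicator 1; P] = P.real (s ∩ t) - P.real s * P.real t := by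
  rw [covariance_eq_sub (memLp_indicator_one hs) (memLp_indicator_one ht),
    ← Set.inter_indicator_one, integral_indicator_one (hs.inter ht), integral_indicator_one hs,
    integral_indicator_one ht]

lemma variance_sum_indicator_one_le {β : Type*} {A : Finset β} {E : β → Set Ω}
    (hE : ∀ x ∈ A, MeasurableSet (E x))
    (hneg : (A : Set β).Pairwise fun x y ↦ P.real (E x ∩ E y) ≤ P.real (E x) * P.real (E y)) :
    Var[∑ x ∈ A, (E x).indicator (1 : Ω → ℝ); P] ≤ ∑ x ∈ A, P.real (E x) := by
  classical
  rw [variance_sum' fun x hx ↦ memLp_indicator_one (hE x hx)]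
  refine Finset.sum_le_sum fun x hx ↦ ?_
  calc ∑ y ∈ A, cov[(E x).indicator (1 : Ω → ℝ), (E y).indicator 1; P]
      ≤ ∑ y ∈ A, if x = y then P.real (E x) else 0 := by
        refine Finset.sum_le_sum fun y hy ↦ ?_
        rw [covariance_indicator_one (hE x hx) (hE y hy)]
        split_ifs with hxy
        · subst hxy
          rw [Set.inter_self]
          exact sub_le_self _ (by positivity)
        · exact sub_nonpos.2 (hneg hx hy hxy)
    _ = P.real (E x) := by rw [Finset.sum_ite_eq, if_pos hx]

lemma one_fourth_le_measureReal_le_of_variance_le {X : Ω → ℝ} (hX : MemLp X 2 P)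
    (hVar : Var[X; P] ≤ P[X]) {r : ℝ} (hr : 1 ≤ r) (hmean : 4 * r ≤ P[X]) :
    1 / 4 ≤ P.real {ω | r ≤ X ω} := by
  have hlt : r < P[X] := by linarith
  have hlow : P.real {ω | X ω < r} ≤ 3 / 4 := by
    have hgap : 3 / 4 * P[X] ≤ P[X] - r := by linarith
    have hpos : 0 ≤ 3 / 4 * P[X] := by linarith
    refine (measureReal_lt_le_variance_div_sq hX hlt).trans ?_
    rw [div_le_iff₀ (pow_pos (sub_pos.2 hlt) 2)]
    calc Var[X; P] ≤ P[X] := hVar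
      _ ≤ 3 / 4 * (3 / 4 * P[X]) ^ 2 := by nlinarith
      _ ≤ 3 / 4 * (P[X] - r) ^ 2 := by gcongr
  have hcover : {ω | r ≤ X ω} ∪ {ω | X ω < r} = Set.univ :=
    Set.eq_univ_of_forall fun ω ↦ le_or_gt r (X ω)
  have htotal := measureReal_union_le (μ := P) {ω | r ≤ X ω} {ω | X ω < r}
  rw [hcover, probReal_univ] at htotal
  linarith

lemma one_fourth_le_measureReal_le_sum_indicator_one {β : Type*} {A : Finset β} {E : β → Set Ω}
    (hE : ∀ x ∈ A, MeasurableSet (E x))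
    (hneg : (A : Set β).Pairwise fun x y ↦ P.real (E x ∩ E y) ≤ P.real (E x) * P.real (E y))
    {r : ℝ} (hr : 1 ≤ r) (hmean : 4 * r ≤ ∑ x ∈ A, P.real (E x)) :
    1 / 4 ≤ P.real {ω | r ≤ (∑ x ∈ A, (E x).indicator (1 : Ω → ℝ)) ω} := by
  have hint : P[∑ x ∈ A, (E x).indicator (1 : Ω → ℝ)] = ∑ x ∈ A, P.real (E x) := by
    simp_rw [Finset.sum_apply]
    rw [integral_finsetSum _ fun x hx ↦ (memLp_indicator_one (hE x hx)).integrable one_le_two]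
    exact Finset.sum_congr rfl fun x hx ↦ integral_indicator_one (hE x hx)
  refine one_fourth_le_measureReal_le_of_variance_le
    (memLp_finsetSum' A fun x hx ↦ memLp_indicator_one (hE x hx)) ?_ hr (hmean.trans_eq hint.symm)
  rw [hint]
  exact variance_sum_indicator_one_le hE hneg

lemma measureReal_compl_inter_compl_le_mul {s t : Set Ω} (hs : MeasurableSet s)
    (ht : MeasurableSet t) (hst : Disjoint s t) : P.real (sᶜ ∩ tᶜ) ≤ P.real sᶜ * P.real tᶜ := by
  rw [← Set.compl_union, probReal_compl_eq_one_sub (hs.union ht), measureReal_union hst ht,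
    probReal_compl_eq_one_sub hs, probReal_compl_eq_one_sub ht]
  have hprod : 0 ≤ P.real s * P.real t := by positivity
  linarith

end SecondMoment

section MissedPoints

variable {ι β : Type*}

open scoped Classical in
/-- The points of `A` that do not appear in the sample `s`, as a finset so that they can be counted;
`A` is the set of points eligible to be counted, and need not contain the values of `s`. -/
noncomputable def missedPoints (A : Finset β) (s : ι → β) : Finset β :=
  {x ∈ A | ∀ i, s i ≠ x}

lemma card_missedPoints_eq_sum_indicator (A : Finset β) (s : ι → β) :
    ((missedPoints A s).card : ℝ) =
      (∑ x ∈ A, (Set.univ.pi fun _ : ι ↦ ({x}ᶜ : Set β)).indicator (1 : (ι → β) → ℝ)) s := by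
  classical
  simp [missedPoints, Finset.sum_apply, Set.indicator_apply]

variable [Fintype ι] [MeasurableSpace β] {ν : Measure β}

lemma measureReal_pi_univ_pi_const [SigmaFinite ν] (s : Set β) :
    (Measure.pi fun _ : ι ↦ ν).real (Set.univ.pi fun _ ↦ s) = ν.real s ^ Fintype.card ι := by
  simp [Measure.real]

lemma pi_uniformOfFintype [DecidableEq ι] [Fintype β] [Nonempty β] [MeasurableSingletonClass β] :
    (Measure.pi fun _ : ι ↦ (PMF.uniformOfFintype β).toMeasure) =
      (PMF.uniformOfFintype (ι → β)).toMeasure := by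
  refine Measure.ext_of_singleton fun s ↦ ?_
  rw [Measure.pi_singleton, PMF.toMeasure_apply_singleton _ _ (measurableSet_singleton s)]
  simp_rw [PMF.toMeasure_apply_singleton _ _ (measurableSet_singleton _)]
  simp [ENNReal.inv_pow]

variable [MeasurableSingletonClass β]

lemma measureReal_pi_compl_singleton_inter_le_mul [IsProbabilityMeasure ν] {x y : β}
    (hxy : x ≠ y) :
    (Measure.pi fun _ : ι ↦ ν).real ((Set.univ.pi fun _ ↦ {x}ᶜ) ∩ Set.univ.pi fun _ ↦ {y}ᶜ) ≤
      (Measure.pi fun _ : ι ↦ ν).real (Set.univ.pi fun _ ↦ {x}ᶜ) *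
        (Measure.pi fun _ : ι ↦ ν).real (Set.univ.pi fun _ ↦ {y}ᶜ) := by
  simp_rw [← Set.pi_inter_distrib, measureReal_pi_univ_pi_const, ← mul_pow]
  exact pow_le_pow_left₀ measureReal_nonneg (measureReal_compl_inter_compl_le_mul
    (measurableSet_singleton x) (measurableSet_singleton y) (Set.disjoint_singleton.2 hxy)) _

theorem one_fourth_le_measureReal_le_card_missedPoints [IsProbabilityMeasure ν] {A : Finset β}
    {r : ℝ} (hr : 1 ≤ r) (hmean : 4 * r ≤ ∑ x ∈ A, (1 - ν.real {x}) ^ Fintype.card ι) :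
    1 / 4 ≤ (Measure.pi fun _ : ι ↦ ν).real {s | r ≤ ((missedPoints A s).card : ℝ)} := by
  simp_rw [card_missedPoints_eq_sum_indicator]
  refine one_fourth_le_measureReal_le_sum_indicator_one
    (fun x _ ↦ .univ_pi fun _ ↦ (measurableSet_singleton x).compl)
    (fun x _ y _ hxy ↦ measureReal_pi_compl_singleton_inter_le_mul hxy) hr ?_
  simpa only [measureReal_pi_univ_pi_const,
    probReal_compl_eq_one_sub (measurableSet_singleton _)] using hmean

theorem one_fourth_le_uniformOfFintype_le_card_missedPoints [DecidableEq ι] [Fintype β]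
    [Nonempty β] {A : Finset β} {r : ℝ} (hr : 1 ≤ r)
    (hmean : 4 * r ≤ A.card * (1 - 1 / (Fintype.card β : ℝ)) ^ Fintype.card ι) :
    ENNReal.ofReal (1 / 4) ≤ (PMF.uniformOfFintype (ι → β)).toMeasure
      {s | r ≤ ((missedPoints A s).card : ℝ)} := by
  rw [← pi_uniformOfFintype]
  refine ENNReal.ofReal_le_of_le_toReal (one_fourth_le_measureReal_le_card_missedPoints hr ?_)
  simpa only [Measure.real, PMF.toMeasure_apply_singleton _ _ (measurableSet_singleton _),
    PMF.uniformOfFintype_apply, ENNReal.toReal_inv, ENNReal.toReal_natCast, one_div,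
    Finset.sum_const, nsmul_eq_mul] using hmean

end MissedPoints

lemma sub_one_lt_card_filter_add_one_le {n : ℕ} {b : ℝ} (hb : b ≤ n) :
    b - 1 < (Finset.univ.filter fun x : Fin n ↦ ((x : ℕ) + 1 : ℝ) ≤ b).card := by
  have hfloor (x : Fin n) : ((x : ℕ) + 1 : ℝ) ≤ b ↔ (x : ℕ) < ⌊b⌋₊ := by
    rw [← Nat.succ_le_iff, Nat.le_floor_iff' (Nat.succ_ne_zero _), Nat.cast_succ]
  simp_rw [hfloor]
  rw [Fin.card_filter_val_lt, min_eq_right (Nat.floor_le_of_le hb)]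
  linarith [Nat.lt_floor_add_one b]

section Estimates

open Real

lemma exp_neg_two_mul_le_one_sub {x : ℝ} (hx₀ : 0 ≤ x) (hx : x ≤ 1 / 2) :
    exp (-(2 * x)) ≤ 1 - x := by
  rw [exp_neg]
  refine (inv_anti₀ (by positivity) (add_one_le_exp (2 * x))).trans ?_
  rw [inv_le_iff_one_le_mul₀ (by positivity)]
  nlinarith

lemma exp_neg_two_mul_le_one_sub_pow {x : ℝ} (hx₀ : 0 ≤ x) (hx : x ≤ 1 / 2) (n : ℕ) :
    exp (-(2 * x * n)) ≤ (1 - x) ^ n := by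
  rw [mul_comm, ← mul_neg, exp_nat_mul]
  exact pow_le_pow_left₀ (exp_pos _).le (exp_neg_two_mul_le_one_sub hx₀ hx) n

lemma le_exp_three_fourths_mul (x : ℝ) : x ≤ exp (3 / 4 * x) := by
  rcases le_total x 0 with hx | hx
  · exact hx.trans (exp_pos _).le
  · have hexp : exp 1 * (3 / 4 * x) ≤ exp (3 / 4 * x) := exp_one_mul_le_exp
    have htwo : 2 ≤ exp 1 := by linarith [add_one_le_exp (1 : ℝ)]
    nlinarith

variable {c r u : ℝ} {m : ℕ}

lemma eight_mul_le_of_eq_div_log (hc : 0 ≤ c) (hr : 0 < r) (hrm : r < m)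
    (hu : u = 8 * c * m / log (m / r)) : 8 * (c * r) ≤ u := by
  have hlog : 0 < log (m / r) := log_pos ((one_lt_div hr).2 hrm)
  have hle : r * log (m / r) ≤ m := by
    calc r * log (m / r) ≤ r * (m / r) := by
          gcongr
          exact log_le_self (by positivity)
      _ = m := mul_div_cancel₀ _ hr.ne'
  rw [hu, le_div_iff₀ hlog]
  calc 8 * (c * r) * log (m / r) = 8 * c * (r * log (m / r)) := by ring
    _ ≤ 8 * c * m := by gcongr

lemma exp_neg_log_div_four_le_one_sub_pow (hc : 1 ≤ c) (hr : 0 < r) (hrm : r < m) (hu₂ : 2 ≤ u)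
    (hu : u = 8 * c * m / log (m / r)) :
    exp (-(log (m / r) / 4)) ≤ (1 - 1 / u) ^ m := by
  have hlog : 0 < log (m / r) := log_pos ((one_lt_div hr).2 hrm)
  have hm : 0 < (m : ℝ) := hr.trans hrm
  have hexponent : 2 * (1 / u) * m ≤ log (m / r) / 4 := by
    calc 2 * (1 / u) * m = log (m / r) / (4 * c) := by
          rw [hu]
          field_simp
          ring
      _ ≤ log (m / r) / 4 := by
          gcongr
          linarith
  calc exp (-(log (m / r) / 4)) ≤ exp (-(2 * (1 / u) * m)) := exp_le_exp.2 (neg_le_neg hexponent)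
    _ ≤ (1 - 1 / u) ^ m := exp_neg_two_mul_le_one_sub_pow (by positivity)
        (one_div_le_one_div_of_le two_pos hu₂) m

lemma four_mul_le_half_mul_exp_neg_log_div_four (hc : 1 ≤ c) (hr : 0 < r) (hrm : r < m)
    (hu : u = 8 * c * m / log (m / r)) :
    4 * r ≤ u / 2 * exp (-(log (m / r) / 4)) := by
  have hratio : 1 < m / r := (one_lt_div hr).2 hrm
  have hm : (m : ℝ) = r * exp (log (m / r)) := by
    rw [exp_log (one_pos.trans hratio), mul_div_cancel₀ _ hr.ne']
  have hlog : 0 < log (m / r) := log_pos hratio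
  set L := log (m / r)
  calc 4 * r ≤ 4 * (c * r) := by nlinarith
    _ ≤ 4 * (c * r) * (exp (3 / 4 * L) / L) := by
        refine le_mul_of_one_le_right (by positivity) ?_
        exact (one_le_div hlog).2 (le_exp_three_fourths_mul L)
    _ = 4 * (c * r) * (exp L * exp (-(L / 4)) / L) := by
        rw [← exp_add]
        ring_nf
    _ = u / 2 * exp (-(L / 4)) := by
        rw [hu, hm]
        ring

lemma four_mul_le_sub_mul_one_sub_pow (hc : 1 ≤ c) (hr : 1 ≤ r) (hrm : r < m)
    (hu : u = 8 * c * m / log (m / r)) :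
    4 * r ≤ (u - c * r - 1) * (1 - 1 / u) ^ m := by
  have hr₀ : 0 < r := by linarith
  have hcr : 1 ≤ c * r := one_le_mul_of_one_le_of_one_le hc hr
  have hu₈ : 8 * (c * r) ≤ u := eight_mul_le_of_eq_div_log (by linarith) hr₀ hrm hu
  calc 4 * r ≤ u / 2 * exp (-(log (m / r) / 4)) :=
        four_mul_le_half_mul_exp_neg_log_div_four hc hr₀ hrm hu
    _ ≤ (u - c * r - 1) * (1 - 1 / u) ^ m :=
        mul_le_mul (by linarith)
          (exp_neg_log_div_four_le_one_sub_pow hc hr₀ hrm (by linarith) hu)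
          (exp_pos _).le (by linarith)

end Estimates

theorem adaboost_unsampled_points_general {c r : ℝ} (hc : 1 ≤ c) (hr : 1 ≤ r)
    {m : ℕ} (hrm : r < m) {u : ℕ} [NeZero u] (hu : (u : ℝ) = 8 * c * m / Real.log (m / r)) :
    ENNReal.ofReal (1 / 4) ≤
      (PMF.uniformOfFintype (Fin m → Fin u)).toMeasure
        {s | r ≤ (({x : Fin u | ((x : ℕ) + 1 : ℝ) ≤ (u : ℝ) - c * r ∧
          ∀ t, s t ≠ x}).ncard : ℝ)} := by
  let A : Finset (Fin u) := {x | ((x : ℕ) + 1 : ℝ) ≤ (u : ℝ) - c * r}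
  have hA : (u : ℝ) - c * r - 1 ≤ A.card :=
    (sub_one_lt_card_filter_add_one_le (sub_le_self _ (by positivity))).le
  have hmissed (s : Fin m → Fin u) :
      {x : Fin u | ((x : ℕ) + 1 : ℝ) ≤ (u : ℝ) - c * r ∧ ∀ t, s t ≠ x} = missedPoints A s := by
    ext x
    simp [missedPoints, A]
  have hone : 1 / (u : ℝ) ≤ 1 :=
    div_le_one_of_le₀ (Nat.one_le_cast.2 NeZero.one_le) (Nat.cast_nonneg u)
  simp_rw [hmissed, Set.ncard_coe_finset]
  refine one_fourth_le_uniformOfFintype_le_card_missedPoints hr ?_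
  rw [Fintype.card_fin, Fintype.card_fin]
  exact (four_mul_le_sub_mul_one_sub_pow hc hr hrm hu).trans
    (mul_le_mul_of_nonneg_right hA (pow_nonneg (sub_nonneg.2 hone) m))

/-- With `u = 8α²m/ln(m/r)` and `r₁ = α²r`, drawing `m` i.i.d.
uniform samples from `{1,…,u}` leaves, with probability at least `1/4`, at least `r`
elements of `{1,…,u−r₁}` unsampled. -/
theorem adaboost_unsampled_points
    (α r : ℝ) (hα : 1 ≤ α) (hr : 1 ≤ r)
    (m : ℕ) (hm : 0 < m) (hmr : 4 * r ≤ (m : ℝ))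
    (u : ℕ) [NeZero u] (hu : 0 < u)
    (hu_val : (u : ℝ) = 8 * α ^ 2 * m / Real.log ((m : ℝ) / r))
    (r1 : ℝ) (hr1 : r1 = α ^ 2 * r) :
    ENNReal.ofReal (1 / 4) ≤
      (PMF.uniformOfFintype (Fin m → Fin u)).toMeasure
        {s | r ≤ (({x : Fin u | ((x : ℕ) + 1 : ℝ) ≤ (u : ℝ) - r1 ∧
          ∀ t, s t ≠ x}).ncard : ℝ)} := by
  subst hr1
  exact adaboost_unsampled_points_general (one_le_pow₀ hα) hr (by linarith) hu_val
end

section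
/- Let n ≥ 2 and r be positive integers with r ≥ 40·log₂(n). Let W be the set of all w ∈ ℝ^n such that ‖w‖₁ = 1 and every coordinate w_i is of the form j_i·40·log₂(n)/r for some integer j_i. Then |W| ≤ 2^{r/20}. -/
/-!
On a grid of step `c > 0`, a vector of unit `ℓ₁`-norm is `c` times an integer vector of `ℓ₁`-norm
`1 / c`. An integer vector of `ℓ₁`-norm `k` is a sum of `k` signed unit vectors, so there are at
most `(2n)ᵏ` of them. Since `2n ≤ n²`, the step `c = 40 log₂ n / r` gives at most
`n ^ (2 / c) = 2 ^ (r / 20)` vectors.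
-/

open scoped Pointwise

section IntegerVectors

variable (ι : Type*) [Fintype ι]

/-- The integer vectors `± eᵢ`, i.e. those of `ℓ₁`-norm one. -/
def signedUnitVectors [DecidableEq ι] : Finset (ι → ℤ) :=
  Finset.univ.image fun p : ι × ℤˣ => Pi.single p.1 (p.2 : ℤ)

lemma card_signedUnitVectors_le [DecidableEq ι] :
    (signedUnitVectors ι).card ≤ 2 * Fintype.card ι :=
  calc (signedUnitVectors ι).card
    _ ≤ Fintype.card (ι × ℤˣ) := Finset.card_image_le
    _ = 2 * Fintype.card ι := by rw [Fintype.card_prod, Fintype.card_units_int, mul_comm]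

variable {ι}

-- `k • s` is the `k`-fold sumset of `s`, not its dilation by `k`.
lemma single_mem_natAbs_nsmul_signedUnitVectors [DecidableEq ι] (i : ι) (a : ℤ) :
    Pi.single i a ∈ a.natAbs • signedUnitVectors ι := by
  obtain ⟨u, hu⟩ : ∃ u : ℤˣ, a = a.natAbs • (u : ℤ) := by
    rcases a.natAbs_eq with h | h
    · exact ⟨1, by simpa using h⟩
    · exact ⟨-1, by simpa using h⟩
  have hmem : Pi.single i (u : ℤ) ∈ signedUnitVectors ι :=
    Finset.mem_image.2 ⟨(i, u), Finset.mem_univ _, rfl⟩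
  have hsingle : Pi.single i a = a.natAbs • (Pi.single i (u : ℤ) : ι → ℤ) := by
    rw [← Pi.single_smul, ← hu]
  rw [hsingle]
  exact Finset.nsmul_mem_nsmul hmem

lemma mem_sum_natAbs_nsmul_signedUnitVectors [DecidableEq ι] (j : ι → ℤ) :
    j ∈ (∑ i, (j i).natAbs) • signedUnitVectors ι := by
  have hsum : ∑ i, Pi.single i (j i) ∈ ∑ i, ((j i).natAbs • signedUnitVectors ι : Set (ι → ℤ)) :=
    Set.finsetSum_mem_finsetSum _ _ _ fun i _ => by
      exact_mod_cast single_mem_natAbs_nsmul_signedUnitVectors i (j i)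
  rw [Finset.univ_sum_single, Finset.sum_nsmul_assoc] at hsum
  exact_mod_cast hsum

lemma setOf_sum_natAbs_eq_subset_nsmul_signedUnitVectors [DecidableEq ι] (k : ℕ) :
    {j : ι → ℤ | ∑ i, (j i).natAbs = k} ⊆ ↑(k • signedUnitVectors ι) := by
  rintro j rfl
  exact mem_sum_natAbs_nsmul_signedUnitVectors j

lemma finite_setOf_sum_natAbs_eq (k : ℕ) : {j : ι → ℤ | ∑ i, (j i).natAbs = k}.Finite := by
  classical
  exact (Finset.finite_toSet _).subset (setOf_sum_natAbs_eq_subset_nsmul_signedUnitVectors k)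

lemma ncard_setOf_sum_natAbs_eq_le (k : ℕ) :
    {j : ι → ℤ | ∑ i, (j i).natAbs = k}.ncard ≤ (2 * Fintype.card ι) ^ k := by
  classical
  calc {j : ι → ℤ | ∑ i, (j i).natAbs = k}.ncard
    _ ≤ (k • signedUnitVectors ι).card := by
      rw [← Set.ncard_coe_finset]
      exact Set.ncard_le_ncard (setOf_sum_natAbs_eq_subset_nsmul_signedUnitVectors k)
    _ ≤ (signedUnitVectors ι).card ^ k := Finset.card_nsmul_le
    _ ≤ (2 * Fintype.card ι) ^ k := Nat.pow_le_pow_left (card_signedUnitVectors_le ι) k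

end IntegerVectors

section UnitGrid

variable (ι : Type*) [Fintype ι]

/-- The vectors of unit `ℓ₁`-norm all of whose coordinates are integer multiples of the grid
step `c`. The norm is spelled out because `ι → ℝ` carries the sup norm. -/
def unitL1Grid (c : ℝ) : Set (ι → ℝ) :=
  {w | ∑ i, |w i| = 1 ∧ ∀ i, ∃ j : ℤ, w i = j * c}

variable {ι} {c : ℝ}

lemma unitL1Grid_subset_image (hc : 0 < c) :
    unitL1Grid ι c ⊆
      (fun j i => (j i : ℝ) * c) '' {j : ι → ℤ | ∑ i, (j i).natAbs = ⌊c⁻¹⌋₊} := by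
  rintro w ⟨hnorm, hgrid⟩
  choose j hj using hgrid
  have hscale : ((∑ i, (j i).natAbs : ℕ) : ℝ) * c = 1 := by
    simp only [← hnorm, hj, abs_mul, abs_of_pos hc, Nat.cast_sum, Nat.cast_natAbs, Int.cast_abs,
      Finset.sum_mul]
  have hfloor : ∑ i, (j i).natAbs = ⌊c⁻¹⌋₊ := by
    rw [← eq_inv_of_mul_eq_one_left hscale, Nat.floor_natCast]
  exact ⟨j, hfloor, (funext hj).symm⟩

lemma finite_unitL1Grid (hc : 0 < c) : (unitL1Grid ι c).Finite :=
  ((finite_setOf_sum_natAbs_eq _).image _).subset (unitL1Grid_subset_image hc)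

lemma ncard_unitL1Grid_le (hc : 0 < c) :
    (unitL1Grid ι c).ncard ≤ (2 * Fintype.card ι) ^ ⌊c⁻¹⌋₊ :=
  have hfin := finite_setOf_sum_natAbs_eq ⌊c⁻¹⌋₊
  calc (unitL1Grid ι c).ncard
    _ ≤ ((fun j i => (j i : ℝ) * c) '' {j : ι → ℤ | ∑ i, (j i).natAbs = ⌊c⁻¹⌋₊}).ncard :=
      Set.ncard_le_ncard (unitL1Grid_subset_image hc) (hfin.image _)
    _ ≤ {j : ι → ℤ | ∑ i, (j i).natAbs = ⌊c⁻¹⌋₊}.ncard := Set.ncard_image_le hfin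
    _ ≤ (2 * Fintype.card ι) ^ ⌊c⁻¹⌋₊ := ncard_setOf_sum_natAbs_eq_le _

lemma ncard_unitL1Grid_le_rpow (hι : 2 ≤ Fintype.card ι) (hc : 0 < c) :
    ((unitL1Grid ι c).ncard : ℝ) ≤ (Fintype.card ι : ℝ) ^ (2 / c) := by
  have hcard : (2 : ℝ) ≤ Fintype.card ι := by exact_mod_cast hι
  calc ((unitL1Grid ι c).ncard : ℝ)
    _ ≤ (2 * Fintype.card ι : ℝ) ^ ⌊c⁻¹⌋₊ := by exact_mod_cast ncard_unitL1Grid_le hc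
    _ ≤ ((Fintype.card ι : ℝ) ^ 2) ^ ⌊c⁻¹⌋₊ := by gcongr; nlinarith
    _ ≤ ((Fintype.card ι : ℝ) ^ 2) ^ c⁻¹ := by
      rw [← Real.rpow_natCast _ ⌊c⁻¹⌋₊]
      exact Real.rpow_le_rpow_of_exponent_le (one_le_pow₀ (by linarith))
        (Nat.floor_le (inv_nonneg.2 hc.le))
    _ = (Fintype.card ι : ℝ) ^ (2 / c) := by
      rw [← Real.rpow_natCast_mul (Nat.cast_nonneg _), Nat.cast_ofNat, div_eq_mul_inv]

end UnitGrid

theorem adaboost_discretization_size_general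
    {ι : Type*} [Fintype ι] (hι : 2 ≤ Fintype.card ι) {r : ℝ} (hr : 0 < r) :
    (unitL1Grid ι (40 * Real.logb 2 (Fintype.card ι) / r)).Finite ∧
      ((unitL1Grid ι (40 * Real.logb 2 (Fintype.card ι) / r)).ncard : ℝ) ≤ 2 ^ (r / 20) := by
  have hcard : (1 : ℝ) < Fintype.card ι := by exact_mod_cast hι
  have hlog : 0 < Real.logb 2 (Fintype.card ι) := Real.logb_pos one_lt_two hcard
  have hstep : 0 < 40 * Real.logb 2 (Fintype.card ι) / r := by positivity
  refine ⟨finite_unitL1Grid hstep, (ncard_unitL1Grid_le_rpow hι hstep).trans_eq ?_⟩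
  have hexp : r / 20 =
      Real.logb 2 (Fintype.card ι) * (2 / (40 * Real.logb 2 (Fintype.card ι) / r)) := by
    field_simp
    norm_num
  rw [hexp, Real.rpow_mul zero_le_two, Real.rpow_logb two_pos (by norm_num) (by linarith)]

/-- The discretized set `W` of unit-`ℓ₁` vectors whose coordinates are
integer multiples of `40·log₂(n)/r` is finite, of size at most `2^(r/20)`. -/
theorem adaboost_discretization_size
    (n r : ℕ) (hn : 2 ≤ n) (hr : 0 < r) (hrn : 40 * Real.logb 2 n ≤ (r : ℝ))
    (W : Set (Fin n → ℝ))
    (hW : W = {w | (∑ i, |w i|) = 1 ∧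
      ∀ i, ∃ j : ℤ, w i = (j : ℝ) * (40 * Real.logb 2 n / r)}) :
    W.Finite ∧ (Nat.card W : ℝ) ≤ (2 : ℝ) ^ ((r : ℝ) / 20) := by
  have hgrid := adaboost_discretization_size_general (ι := Fin n) (by simpa) (Nat.cast_pos.2 hr)
  rwa [Fintype.card_fin, unitL1Grid, ← hW] at hgrid
end
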